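/- R_3(B(K_4), 2) = 6: every 2-coloring of the 3-element subsets of a 6-element set contains six pairwise distinct 3-sets of the same color forming a Berge-K_4, and there is a 2-coloring of the 3-element subsets of a 5-element set with no monochromatic Berge-K_4. -/

import Mathlib

/-!
A finite problem, settled by a verified search.

For the lower bound, a 5-element set has ten triples; colouring the five in `fiveTriples` by `0`
and the other five by `1` leaves each colour with fewer triples than the six edges of `K₄`.

For the upper bound, subsets of `Fin 6` are encoded by the binary digits of a natural number below
`64`, and a set of such codes is again a natural number, used as a bit mask. `matchEdges` looks by
backtracking for distinct available triples containing prescribed pairs, `hasBerge` runs it on the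
six pairs inside each of the fifteen possible cores, and `search` colours the twenty triples one
after the other, abandoning a branch as soon as the colour just used contains a Berge-`K₄`.
With the triples in the order of `triples` the tree closes after about 1300 nodes, which
`search_eq_true` checks by evaluation in the kernel. The basic operations are written `Nat.land`,
`Nat.ble`, ... rather than in infix notation because the kernel computes these directly.
Only soundness of the procedures is needed: `search_sound` turns a successful search into a
monochromatic Berge-`K₄` for an arbitrary colouring.
-/

open SimpleGraph

/-- A set family `A` of hyperedges contains a Berge-`G` hypergraph. -/
def BergeIn {V α : Type} (G : SimpleGraph V) (A : Set (Finset α)) : Prop :=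
  ∃ φ : V → α, Function.Injective φ ∧
    ∃ ψ : G.edgeSet → Finset α, Function.Injective ψ ∧
      (∀ e, ψ e ∈ A) ∧
      ∀ (e : G.edgeSet), ∀ x ∈ (e : Sym2 V), φ x ∈ ψ e

/-- The complete graph `K₄`. -/
def K4 : SimpleGraph (Fin 4) := ⊤

/-- The subset of `Fin 6` whose elements are the positions of the binary digits `1` of `n`. -/
def tri (n : ℕ) : Finset (Fin 6) := Finset.univ.filter fun v => n.testBit v

/-- The codes of the twenty 3-element subsets of `Fin 6`, in an order that keeps the search tree
small. -/
def triples : List ℕ :=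
  [7, 14, 25, 11, 38, 13, 41, 44, 42, 37, 35, 19, 22, 56, 26, 28, 50, 52, 49, 21]

/-- Whether the binary digit of `a` at position `t` is `1`. -/
def avail (a t : ℕ) : Bool := Nat.ble 1 (Nat.land (Nat.shiftRight a t) 1)

/-- Given pairs (as codes) and a mask `a` of available triples, decide whether distinct available
triples, one containing each pair, can be chosen. Candidates for a pair `p` are the codes `p ∪ {v}`;
when `v ∈ p` this is `p` itself, which is not the code of a triple. -/
def matchEdges : List ℕ → ℕ → Bool
  | [], _ => true
  | p :: ps, a => [1, 2, 4, 8, 16, 32].any fun k =>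
      and (avail a (Nat.lor p k)) (matchEdges ps (Nat.xor a (Nat.pow 2 (Nat.lor p k))))

/-- The mask of all triples containing the pair with code `p`. -/
def candMask (p : ℕ) : ℕ :=
  Nat.sub ([1, 2, 4, 8, 16, 32].foldr (fun k m => Nat.lor (Nat.pow 2 (Nat.lor p k)) m) 0)
    (Nat.pow 2 p)

/-- The edges of `K4`. -/
def edgesK4 : List (Sym2 (Fin 4)) := [s(0, 1), s(0, 2), s(0, 3), s(1, 2), s(1, 3), s(2, 3)]

/-- The code of the image of an edge under `φ`. -/
def edgeCode (φ : Fin 4 → Fin 6) : Sym2 (Fin 4) → ℕ :=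
  Sym2.lift ⟨fun x y => 2 ^ (φ x).val ||| 2 ^ (φ y).val, fun _ _ => Nat.lor_comm _ _⟩

/-- One embedding of `Fin 4` for each of the fifteen 4-element subsets of `Fin 6`. -/
def cores : List (Fin 4 → Fin 6) :=
  [![0, 1, 2, 3], ![0, 1, 2, 4], ![0, 1, 2, 5], ![0, 1, 3, 4], ![0, 1, 3, 5], ![0, 1, 4, 5],
   ![0, 2, 3, 4], ![0, 2, 3, 5], ![0, 2, 4, 5], ![0, 3, 4, 5], ![1, 2, 3, 4], ![1, 2, 3, 5],
   ![1, 2, 4, 5], ![1, 3, 4, 5], ![2, 3, 4, 5]]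

/-- Decides whether the triples in the mask `a` contain a Berge-`K4`. The first conjunct is a cheap
necessary condition: each pair lies in some available triple. -/
def hasBerge (a : ℕ) : Bool := cores.any fun φ =>
  and ((edgesK4.map (edgeCode φ)).all fun p => Nat.ble 1 (Nat.land a (candMask p)))
    (matchEdges (edgesK4.map (edgeCode φ)) a)

/-- Search for an extension of the partial 2-colouring with colour classes `a` and `b`, of sizes `m`
and `n`, to the triples in the list, without a monochromatic Berge-`K4`; `true` means that there is
none. The sizes serve only to skip classes with fewer than six triples. -/
def search : List ℕ → ℕ → ℕ → ℕ → ℕ → Bool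
  | [], _, _, _, _ => false
  | t :: ts, a, m, b, n =>
      and (or (and (Nat.ble 5 m) (hasBerge (Nat.lor a (Nat.pow 2 t))))
          (search ts (Nat.lor a (Nat.pow 2 t)) (Nat.succ m) b n))
        (or (and (Nat.ble 5 n) (hasBerge (Nat.lor b (Nat.pow 2 t))))
          (search ts a m (Nat.lor b (Nat.pow 2 t)) (Nat.succ n)))

set_option maxHeartbeats 4000000 in
theorem search_eq_true : search triples 0 0 0 0 = true := by decide +kernel

theorem avail_eq (a t : ℕ) : avail a t = a.testBit t := by
  rw [Bool.eq_iff_iff, avail, Nat.ble_eq]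
  change 1 ≤ (a >>> t) &&& 1 ↔ _
  rw [Nat.testBit, Nat.and_comm 1, bne_iff_ne]
  omega

theorem matchEdges_sound : ∀ (ps : List ℕ) (a : ℕ), ps.Nodup → matchEdges ps a = true →
    ∃ f : ℕ → ℕ, (∀ p ∈ ps, ∀ q ∈ ps, f p = f q → p = q) ∧
      ∀ p ∈ ps, a.testBit (f p) = true ∧ ∀ v, p.testBit v = true → (f p).testBit v = true
  | [], _, _, _ => ⟨id, by simp, by simp⟩
  | p :: ps, a, hnd, h => by
    rw [List.nodup_cons] at hnd
    simp only [matchEdges, List.any_eq_true, Bool.and_eq_true, avail_eq] at h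
    obtain ⟨k, -, hk, hm⟩ := h
    change a.testBit (p ||| k) = true at hk
    change matchEdges ps (a ^^^ 2 ^ (p ||| k)) = true at hm
    obtain ⟨f, hinj, hf⟩ := matchEdges_sound ps _ hnd.2 hm
    set t := p ||| k with ht
    have hne : ∀ q ∈ ps, q ≠ p := fun q hq hqp => hnd.1 (hqp ▸ hq)
    -- Removing `t` from the mask keeps the remaining choices different from `t`.
    have hft : ∀ q ∈ ps, f q ≠ t := by
      intro q hq hqt
      have := (hf q hq).1
      simp [hqt, Nat.testBit_xor, hk] at this
    have hfa : ∀ q ∈ ps, a.testBit (f q) = true := by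
      intro q hq
      have := (hf q hq).1
      rw [Nat.testBit_xor, Nat.testBit_two_pow_of_ne (hft q hq).symm] at this
      simpa using this
    refine ⟨Function.update f p t, ?_, ?_⟩
    · intro q hq r hr hqr
      rcases List.mem_cons.1 hq with hqp | hq <;> rcases List.mem_cons.1 hr with hrp | hr
      · rw [hqp, hrp]
      · rw [hqp, Function.update_self, Function.update_of_ne (hne r hr)] at hqr
        exact absurd hqr.symm (hft r hr)
      · rw [hrp, Function.update_self, Function.update_of_ne (hne q hq)] at hqr
        exact absurd hqr (hft q hq)
      · rw [Function.update_of_ne (hne q hq), Function.update_of_ne (hne r hr)] at hqr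
        exact hinj q hq r hr hqr
    · intro q hq
      rcases List.mem_cons.1 hq with rfl | hq
      · rw [Function.update_self]
        exact ⟨hk, fun v hv => by simp [ht, Nat.testBit_or, hv]⟩
      · rw [Function.update_of_ne (hne q hq)]
        exact ⟨hfa q hq, (hf q hq).2⟩

theorem cores_spec : ∀ φ ∈ cores, Function.Injective φ ∧ (edgesK4.map (edgeCode φ)).Nodup := by
  decide +kernel

theorem mem_edgesK4 : ∀ e ∈ K4.edgeSet, e ∈ edgesK4 := by
  intro e
  induction e with | _ x y
  simp only [K4, SimpleGraph.mem_edgeSet, SimpleGraph.top_adj]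
  revert x y
  decide

theorem tri_injOn : ∀ s ∈ triples, ∀ t ∈ triples, tri s = tri t → s = t := by decide +kernel

theorem card_tri : ∀ t ∈ triples, (tri t).card = 3 := by decide +kernel

theorem testBit_edgeCode (φ : Fin 4 → Fin 6) (e : Sym2 (Fin 4)) :
    ∀ x ∈ e, (edgeCode φ e).testBit (φ x) = true := by
  induction e with | _ x y
  intro z hz
  rcases Sym2.mem_iff.1 hz with rfl | rfl <;> simp [edgeCode, Nat.testBit_or]

theorem hasBerge_sound (a : ℕ) (A : Set (Finset (Fin 6)))
    (ha : ∀ t, a.testBit t = true → t ∈ triples ∧ tri t ∈ A) (h : hasBerge a = true) :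
    BergeIn K4 A := by
  simp only [hasBerge, List.any_eq_true, Bool.and_eq_true] at h
  obtain ⟨φ, hφ, -, hm⟩ := h
  obtain ⟨hinj, hnd⟩ := cores_spec φ hφ
  obtain ⟨f, hf, hfa⟩ := matchEdges_sound _ _ hnd hm
  have hmem : ∀ e : K4.edgeSet, edgeCode φ e ∈ edgesK4.map (edgeCode φ) := fun e =>
    List.mem_map_of_mem (mem_edgesK4 e e.2)
  have key : ∀ e : K4.edgeSet, _ := fun e => ha _ (hfa _ (hmem e)).1
  refine ⟨φ, hinj, fun e => tri (f (edgeCode φ e)), ?_, fun e => (key e).2, ?_⟩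
  · intro e e' hee
    have h1 := tri_injOn _ (key e).1 _ (key e').1 hee
    have h2 := hf _ (hmem e) _ (hmem e') h1
    exact Subtype.ext
      (List.inj_on_of_nodup_map hnd (mem_edgesK4 e e.2) (mem_edgesK4 e' e'.2) h2)
  · intro e x hx
    simpa [tri] using (hfa _ (hmem e)).2 _ (testBit_edgeCode φ e x hx)

theorem search_sound (c : Finset (Fin 6) → Fin 2) : ∀ (ts : List ℕ) (a m b n : ℕ),
    (∀ t ∈ ts, t ∈ triples) →
    (∀ t, a.testBit t = true → t ∈ triples ∧ c (tri t) = 0) →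
    (∀ t, b.testBit t = true → t ∈ triples ∧ c (tri t) = 1) →
    search ts a m b n = true →
    ∃ i : Fin 2, BergeIn K4 {s : Finset (Fin 6) | s.card = 3 ∧ c s = i}
  | [], _, _, _, _, _, _, _, h => by simp [search] at h
  | t :: ts, a, m, b, n, hts, ha, hb, h => by
    have hts' : ∀ s ∈ ts, s ∈ triples := fun s hs => hts s (List.mem_cons_of_mem _ hs)
    have ext : ∀ (i : Fin 2) (m : ℕ), (∀ s, m.testBit s = true → s ∈ triples ∧ c (tri s) = i) →
        c (tri t) = i →
        ∀ s, (m ||| 2 ^ t).testBit s = true → s ∈ triples ∧ c (tri s) = i := by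
      intro i m hm hc s hs
      rw [Nat.testBit_or, Bool.or_eq_true, Nat.testBit_two_pow, decide_eq_true_eq] at hs
      rcases hs with hs | rfl
      · exact hm s hs
      · exact ⟨hts _ List.mem_cons_self, hc⟩
    have fin : ∀ (i : Fin 2) (m : ℕ), (∀ s, m.testBit s = true → s ∈ triples ∧ c (tri s) = i) →
        hasBerge m = true → BergeIn K4 {s : Finset (Fin 6) | s.card = 3 ∧ c s = i} :=
      fun i m hm => hasBerge_sound m _ fun s hs =>
        ⟨(hm s hs).1, card_tri s (hm s hs).1, (hm s hs).2⟩
    simp only [search, Bool.and_eq_true, Bool.or_eq_true] at h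
    have hc : c (tri t) = 0 ∨ c (tri t) = 1 := by omega
    rcases hc with hc | hc
    · have ha' := ext 0 a ha hc
      rcases h.1 with ⟨-, h⟩ | h
      · exact ⟨0, fin 0 _ ha' h⟩
      · exact search_sound c ts _ _ _ _ hts' ha' hb h
    · have hb' := ext 1 b hb hc
      rcases h.2 with ⟨-, h⟩ | h
      · exact ⟨1, fin 1 _ hb' h⟩
      · exact search_sound c ts _ _ _ _ hts' ha hb' h

/-- Five of the ten 3-element subsets of `Fin 5`. -/
def fiveTriples : Finset (Finset (Fin 5)) :=
  {{0, 1, 2}, {0, 1, 3}, {0, 1, 4}, {0, 2, 3}, {0, 2, 4}}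

/-- A Berge-`K4` needs six hyperedges. -/
theorem not_bergeIn_of_card {α : Type} (A : Finset (Finset α)) (hA : A.card < 6) :
    ¬ BergeIn K4 (A : Set (Finset α)) := by
  classical
  rintro ⟨-, -, ψ, hψ, hmem, -⟩
  have hsub : edgesK4.toFinset ⊆ K4.edgeSet.toFinite.toFinset := by
    intro e he
    rw [Set.Finite.mem_toFinset]
    simp only [edgesK4, List.mem_toFinset, List.mem_cons, List.not_mem_nil, or_false] at he
    rcases he with rfl | rfl | rfl | rfl | rfl | rfl <;> simp [K4]
  have h6 : edgesK4.toFinset.card = 6 := by decide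
  have h1 := Finset.card_le_card hsub
  rw [← Set.ncard_eq_toFinset_card, h6] at h1
  have h2 : Nat.card K4.edgeSet ≤ Nat.card A :=
    Nat.card_le_card_of_injective (fun e => (⟨ψ e, hmem e⟩ : A))
      fun e e' h => hψ (congrArg Subtype.val h)
  rw [Nat.card_coe_set_eq, Nat.card_eq_fintype_card, Fintype.card_coe] at h2
  omega

theorem bergeRamsey_K4_two :
    (∀ c : Finset (Fin 6) → Fin 2, ∃ i : Fin 2,
      BergeIn K4 {s : Finset (Fin 6) | s.card = 3 ∧ c s = i}) ∧
    (∃ c : Finset (Fin 5) → Fin 2, ∀ i : Fin 2,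
      ¬ BergeIn K4 {s : Finset (Fin 5) | s.card = 3 ∧ c s = i}) := by
  refine ⟨fun c => search_sound c triples 0 0 0 0 (fun _ h => h) (by simp) (by simp) search_eq_true,
    fun s => if s ∈ fiveTriples then 0 else 1, fun i => ?_⟩
  have hcard : ∀ i : Fin 2, (Finset.univ.filter fun s : Finset (Fin 5) =>
      s.card = 3 ∧ (if s ∈ fiveTriples then (0 : Fin 2) else 1) = i).card < 6 := by
    decide +kernel
  simpa using not_bergeIn_of_card _ (hcard i)
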